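/- arXiv:1404.6996 — 5 statements merged into one kernel-verified Lean document; each statement's English description precedes it below -/
import Mathlib

section
/- Let a, b, c ∈ ℝ with a ≠ 0 and c ≠ 0, and let φ(t) = (e^{at} cos(ct), e^{at} sin(ct), (b/a) e^{at}). Then for every t ∈ ℝ, φ'(t) × φ''(t) ≠ 0 and the torsion of φ, given by ⟨φ'(t) × φ''(t), φ'''(t)⟩ / |φ'(t) × φ''(t)|², equals (bc / (a² + b² + c²)) · e^{−at}. -/
/-!
In the rotating frame `(𝐞_r, 𝐞_θ, 𝐞_z)` the spiral is `e^{at}` times a constant vector, and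
differentiation acts linearly on the frame coordinates (`deriv_frameCurve`). Up to the factor
`e^{at}`, the first three derivatives therefore have coordinates `(a, c, b)`,
`(a² - c², 2ac, ab)` and `(a³ - 3ac², 3a²c - c³, a²b)`. Since the frame is orthonormal,
`|φ' × φ''|² = e^{4at} c² (a² + c²)(a² + b² + c²)` and
`⟨φ' × φ'', φ'''⟩ = e^{3at} b c³ (a² + c²)`; the first is positive and the quotient is the torsion.
-/

open Real

/-- The logarithmic spiral `φ[a,b,c](t) = (e^{at}cos(ct), e^{at}sin(ct), (b/a)e^{at})`. -/
noncomputable def logSpiral (a b c : ℝ) : ℝ → ℝ × ℝ × ℝ := fun t =>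
  (Real.exp (a * t) * Real.cos (c * t), Real.exp (a * t) * Real.sin (c * t),
    (b / a) * Real.exp (a * t))

/-- The Euclidean norm of a vector in `ℝ × ℝ × ℝ`. -/
noncomputable def enorm3 (v : ℝ × ℝ × ℝ) : ℝ :=
  Real.sqrt (v.1 ^ 2 + v.2.1 ^ 2 + v.2.2 ^ 2)

/-- The cross product in `ℝ × ℝ × ℝ`. -/
def cross3 (v w : ℝ × ℝ × ℝ) : ℝ × ℝ × ℝ :=
  (v.2.1 * w.2.2 - v.2.2 * w.2.1, v.2.2 * w.1 - v.1 * w.2.2, v.1 * w.2.1 - v.2.1 * w.1)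

/-- The Euclidean inner product in `ℝ × ℝ × ℝ`. -/
def dot3 (v w : ℝ × ℝ × ℝ) : ℝ := v.1 * w.1 + v.2.1 * w.2.1 + v.2.2 * w.2.2

/-- The curve `e^{at}(p 𝐞_r(ct) + q 𝐞_θ(ct)) + r e^{at} 𝐞_z`, that is, the curve with constant
coordinates `(p, q, r)` in the moving frame `(𝐞_r, 𝐞_θ, 𝐞_z)` at angle `ct`, scaled by `e^{at}`. -/
noncomputable def frameCurve (a c p q r : ℝ) : ℝ → ℝ × ℝ × ℝ := fun t =>
  (Real.exp (a * t) * (p * Real.cos (c * t) - q * Real.sin (c * t)),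
    Real.exp (a * t) * (p * Real.sin (c * t) + q * Real.cos (c * t)),
    r * Real.exp (a * t))

/-- In frame coordinates, differentiation is the linear map `(p, q, r) ↦ (ap - cq, aq + cp, ar)`. -/
lemma deriv_frameCurve (a c p q r : ℝ) :
    deriv (frameCurve a c p q r) = frameCurve a c (a * p - c * q) (a * q + c * p) (a * r) := by
  funext t
  have hlin (k : ℝ) : HasDerivAt (fun t : ℝ => k * t) k t := by
    simpa using (hasDerivAt_id t).const_mul k
  have hE := (hlin a).exp
  have hC := (hlin c).cos
  have hS := (hlin c).sin
  have h1 := hE.mul ((hC.const_mul p).sub (hS.const_mul q))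
  have h2 := hE.mul ((hS.const_mul p).add (hC.const_mul q))
  have h3 := hE.const_mul r
  refine (h1.prodMk (h2.prodMk h3)).deriv.trans ?_
  simp only [frameCurve, Prod.mk.injEq, Pi.sub_apply, Pi.add_apply]
  refine ⟨?_, ?_, ?_⟩ <;> ring

lemma logSpiral_eq_frameCurve (a b c : ℝ) :
    logSpiral a b c = frameCurve a c 1 0 (b / a) := by
  funext t
  simp [logSpiral, frameCurve]

/-- The torsion of the logarithmic spiral:
`⟨φ'×φ'', φ'''⟩/|φ'×φ''|² = (bc/(a²+b²+c²))·e^{−at}`, and `φ'×φ'' ≠ 0`. -/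
theorem logSpiral_torsion (a b c : ℝ) (ha : a ≠ 0) (hc : c ≠ 0) (t : ℝ) :
    cross3 (deriv (logSpiral a b c) t) (deriv (deriv (logSpiral a b c)) t) ≠ 0 ∧
    dot3 (cross3 (deriv (logSpiral a b c) t) (deriv (deriv (logSpiral a b c)) t))
        (deriv (deriv (deriv (logSpiral a b c))) t) /
        (enorm3 (cross3 (deriv (logSpiral a b c) t)
          (deriv (deriv (logSpiral a b c)) t))) ^ 2 =
      b * c / (a ^ 2 + b ^ 2 + c ^ 2) * Real.exp (-(a * t)) := by
  rw [logSpiral_eq_frameCurve]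
  simp only [deriv_frameCurve]
  have hb : a * (b / a) = b := mul_div_cancel₀ b ha
  rw [hb]
  set u := cross3 (frameCurve a c (a * 1 - c * 0) (a * 0 + c * 1) b t)
    (frameCurve a c (a * (a * 1 - c * 0) - c * (a * 0 + c * 1))
      (a * (a * 0 + c * 1) + c * (a * 1 - c * 0)) (a * b) t) with hu
  have hcs := Real.sin_sq_add_cos_sq (c * t)
  have hE := Real.exp_pos (a * t)
  have hN : u.1 ^ 2 + u.2.1 ^ 2 + u.2.2 ^ 2 =
      Real.exp (a * t) ^ 4 * (c ^ 2 * (a ^ 2 + c ^ 2) * (a ^ 2 + b ^ 2 + c ^ 2)) := by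
    simp only [hu, cross3, frameCurve]
    generalize Real.exp (a * t) = E
    generalize Real.sin (c * t) = s at *
    generalize Real.cos (c * t) = k at *
    have hs : s ^ 2 = 1 - k ^ 2 := by linarith
    grind
  have hD : dot3 u (frameCurve a c
      (a * (a * (a * 1 - c * 0) - c * (a * 0 + c * 1)) -
        c * (a * (a * 0 + c * 1) + c * (a * 1 - c * 0)))
      (a * (a * (a * 0 + c * 1) + c * (a * 1 - c * 0)) +
        c * (a * (a * 1 - c * 0) - c * (a * 0 + c * 1))) (a * (a * b)) t) =
      Real.exp (a * t) ^ 3 * (b * c ^ 3 * (a ^ 2 + c ^ 2)) := by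
    simp only [hu, dot3, cross3, frameCurve]
    generalize Real.exp (a * t) = E
    generalize Real.sin (c * t) = s at *
    generalize Real.cos (c * t) = k at *
    have hs : s ^ 2 = 1 - k ^ 2 := by linarith
    grind
  have hpos : 0 < u.1 ^ 2 + u.2.1 ^ 2 + u.2.2 ^ 2 := by
    rw [hN]; positivity
  refine ⟨fun h0 => ?_, ?_⟩
  · simp [h0] at hpos
  · rw [hD, enorm3, Real.sq_sqrt hpos.le, hN, Real.exp_neg]
    have h1 : a ^ 2 + c ^ 2 ≠ 0 := by positivity
    have h2 : a ^ 2 + b ^ 2 + c ^ 2 ≠ 0 := by positivity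
    field_simp
end

section
/- Let κ₀ > 0, τ₀ ∈ ℝ, and ξ ∈ ℝ with ξ ≠ 0. Set a* = ξ, b* = (τ₀/κ₀)·√(κ₀² + τ₀² + ξ²), c* = √(κ₀² + τ₀²), and define γ(z) = (a*² + b*² + c*²)^{−1/2} · φ[a*,b*,c*](z). Then for every z ∈ ℝ: (i) |γ'(z)| = e^{ξz}; (ii) the curvature |γ'(z) × γ''(z)| / |γ'(z)|³ equals κ₀ e^{−ξz}; and (iii) the torsion ⟨γ'(z) × γ''(z), γ'''(z)⟩ / |γ'(z) × γ''(z)|² equals τ₀ e^{−ξz}. -/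
/-!
In the rotating orthonormal frame `(𝐞_r(ct), 𝐞_r'(ct), 𝐞_z)`, the derivatives of a logarithmic
spiral all have the form `e^{at}` times a vector of constant coordinates, and differentiation acts on
the coordinates by `(p, q, r) ↦ (ap - cq, aq + cp, ar)` (`hasDerivAt_frameVec`). As the frame is
orthonormal and positively oriented, norms, cross and inner products can be computed on these
coordinates. With `N = a² + b² + c²` this gives, for `N^{-1/2} φ[a,b,c]`, speed `e^{at}`, curvature
`c √(a² + c²) / √N · e^{-at}` and torsion `b c / √N · e^{-at}`.
For the chosen parameters, `√N = c √(κ₀² + τ₀² + ξ²) / κ₀`, so these are the prescribed values.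
-/

open Real

/-- The vector with coordinates `ρ (p, q, r)` in the orthonormal frame obtained from the standard one
by rotating through the angle `θ` about the third axis. -/
noncomputable def frameVec (ρ θ p q r : ℝ) : ℝ × ℝ × ℝ :=
  (ρ * (p * cos θ - q * sin θ), ρ * (p * sin θ + q * cos θ), ρ * r)

lemma hasDerivAt_frameVec (a c p q r t : ℝ) :
    HasDerivAt (fun t => frameVec (exp (a * t)) (c * t) p q r)
      (frameVec (exp (a * t)) (c * t) (a * p - c * q) (a * q + c * p) (a * r)) t := by
  have he : HasDerivAt (fun t => exp (a * t)) (exp (a * t) * a) t := by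
    simpa using ((hasDerivAt_id t).const_mul a).exp
  have hc : HasDerivAt (fun t => cos (c * t)) (-sin (c * t) * c) t := by
    simpa using ((hasDerivAt_id t).const_mul c).cos
  have hs : HasDerivAt (fun t => sin (c * t)) (cos (c * t) * c) t := by
    simpa using ((hasDerivAt_id t).const_mul c).sin
  have h1 := he.mul ((hc.const_mul p).sub (hs.const_mul q))
  have h2 := he.mul ((hs.const_mul p).add (hc.const_mul q))
  have h3 := he.mul_const r
  refine (h1.prodMk (h2.prodMk h3)).congr_deriv ?_
  simp only [frameVec, Prod.mk.injEq, Pi.sub_apply, Pi.add_apply]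
  refine ⟨?_, ?_, ?_⟩ <;> ring

lemma deriv_frameVec (a c p q r : ℝ) :
    deriv (fun t => frameVec (exp (a * t)) (c * t) p q r) =
      fun t => frameVec (exp (a * t)) (c * t) (a * p - c * q) (a * q + c * p) (a * r) :=
  funext fun t => (hasDerivAt_frameVec a c p q r t).deriv

lemma enorm3_frameVec {ρ : ℝ} (hρ : 0 ≤ ρ) (θ p q r : ℝ) :
    enorm3 (frameVec ρ θ p q r) = ρ * √(p ^ 2 + q ^ 2 + r ^ 2) := by
  rw [enorm3, ← sqrt_sq hρ, ← sqrt_mul (sq_nonneg ρ), sqrt_sq hρ]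
  congr 1
  simp only [frameVec]
  linear_combination ρ ^ 2 * (p ^ 2 + q ^ 2) * sin_sq_add_cos_sq θ

lemma cross3_frameVec (ρ ρ' θ p q r p' q' r' : ℝ) :
    cross3 (frameVec ρ θ p q r) (frameVec ρ' θ p' q' r') =
      frameVec (ρ * ρ') θ (q * r' - r * q') (r * p' - p * r') (p * q' - q * p') := by
  simp only [cross3, frameVec, Prod.mk.injEq]
  refine ⟨by ring, by ring, ?_⟩
  linear_combination ρ * ρ' * (p * q' - q * p') * sin_sq_add_cos_sq θ

lemma dot3_frameVec (ρ ρ' θ p q r p' q' r' : ℝ) :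
    dot3 (frameVec ρ θ p q r) (frameVec ρ' θ p' q' r') =
      ρ * ρ' * (p * p' + q * q' + r * r') := by
  simp only [dot3, frameVec]
  linear_combination ρ * ρ' * (p * p' + q * q') * sin_sq_add_cos_sq θ

/-- The speed, curvature and torsion of the rescaled spiral, for an arbitrary scale `s > 0` and
expressed through the square roots `w = √(a² + c²)` and `n = √(a² + b² + c²)`. -/
lemma smul_logSpiral_invariants {a b c s w n : ℝ} (ha : a ≠ 0) (hc : 0 < c) (hs : 0 < s)
    (hw : 0 < w) (hn : 0 < n) (hw2 : w ^ 2 = a ^ 2 + c ^ 2) (hn2 : n ^ 2 = a ^ 2 + b ^ 2 + c ^ 2)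
    {γ : ℝ → ℝ × ℝ × ℝ} (hγ : γ = fun t => s • logSpiral a b c t) (z : ℝ) :
    enorm3 (deriv γ z) = s * n * exp (a * z) ∧
    enorm3 (cross3 (deriv γ z) (deriv (deriv γ) z)) / (enorm3 (deriv γ z)) ^ 3 =
      c * w / (s * n ^ 2) * exp (-(a * z)) ∧
    dot3 (cross3 (deriv γ z) (deriv (deriv γ) z)) (deriv (deriv (deriv γ)) z) /
        (enorm3 (cross3 (deriv γ z) (deriv (deriv γ) z))) ^ 2 =
      b * c / (s * n ^ 2) * exp (-(a * z)) := by
  have h0 : γ = fun t => frameVec (exp (a * t)) (c * t) s 0 (s * (b / a)) := by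
    rw [hγ]
    funext t
    simp only [logSpiral, frameVec, Prod.smul_mk, smul_eq_mul, Prod.mk.injEq]
    refine ⟨?_, ?_, ?_⟩ <;> ring
  have h1 : deriv γ = fun t => frameVec (exp (a * t)) (c * t) (s * a) (s * c) (s * b) := by
    rw [h0, deriv_frameVec]
    funext t
    congr 1
    · ring
    · ring
    · field_simp
  have hE : 0 < exp (a * z) := exp_pos _
  have hnorm : enorm3 (deriv γ z) = s * n * exp (a * z) := by
    rw [h1, enorm3_frameVec hE.le,
      show (s * a) ^ 2 + (s * c) ^ 2 + (s * b) ^ 2 = (s * n) ^ 2 by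
        linear_combination -s ^ 2 * hn2, sqrt_sq (by positivity), mul_comm]
  have hcross : enorm3 (cross3 (deriv γ z) (deriv (deriv γ) z)) =
      s ^ 2 * (c * w * n) * exp (a * z) ^ 2 := by
    rw [h1, deriv_frameVec, cross3_frameVec, enorm3_frameVec (by positivity)]
    -- The squared norm of the cross product is `s⁴ c² (a² + c²) (a² + b² + c²)`.
    have key : √((s * c * (a * (s * b)) - s * b * (a * (s * c) + c * (s * a))) ^ 2 +
        (s * b * (a * (s * a) - c * (s * c)) - s * a * (a * (s * b))) ^ 2 +
        (s * a * (a * (s * c) + c * (s * a)) - s * c * (a * (s * a) - c * (s * c))) ^ 2) =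
        s ^ 2 * (c * w * n) := by
      rw [sqrt_eq_iff_mul_self_eq (by positivity) (by positivity)]
      linear_combination -s ^ 4 * c ^ 2 * (n ^ 2 * hw2 + (a ^ 2 + c ^ 2) * hn2)
    rw [key]
    ring
  have hdet : dot3 (cross3 (deriv γ z) (deriv (deriv γ) z)) (deriv (deriv (deriv γ)) z) =
      s ^ 3 * (b * c ^ 3 * w ^ 2) * exp (a * z) ^ 3 := by
    rw [h1, deriv_frameVec, deriv_frameVec, cross3_frameVec, dot3_frameVec, hw2]
    ring
  refine ⟨hnorm, ?_, ?_⟩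
  · rw [hcross, hnorm, exp_neg]
    field_simp
  · rw [hdet, hcross, exp_neg]
    field_simp

/-- Existence of logarithmic spirals with prescribed curvature `κ₀e^{−ξz}`, torsion
`τ₀e^{−ξz}`, and arc length element `e^{ξz}dz`: the explicit rescaled spiral
`γ(z) = (a*²+b*²+c*²)^{−1/2}·φ[a*,b*,c*](z)` has these properties. -/
theorem logSpiral_prescribed (κ₀ τ₀ ξ : ℝ) (hκ : 0 < κ₀) (hξ : ξ ≠ 0) :
    ∀ z : ℝ,
      letI a : ℝ := ξ
      letI b : ℝ := (τ₀ / κ₀) * Real.sqrt (κ₀ ^ 2 + τ₀ ^ 2 + ξ ^ 2)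
      letI c : ℝ := Real.sqrt (κ₀ ^ 2 + τ₀ ^ 2)
      letI γ : ℝ → ℝ × ℝ × ℝ := fun z' =>
        (Real.sqrt (a ^ 2 + b ^ 2 + c ^ 2))⁻¹ • logSpiral a b c z'
      enorm3 (deriv γ z) = Real.exp (ξ * z) ∧
      enorm3 (cross3 (deriv γ z) (deriv (deriv γ) z)) / (enorm3 (deriv γ z)) ^ 3 =
        κ₀ * Real.exp (-(ξ * z)) ∧
      dot3 (cross3 (deriv γ z) (deriv (deriv γ) z)) (deriv (deriv (deriv γ)) z) /
          (enorm3 (cross3 (deriv γ z) (deriv (deriv γ) z))) ^ 2 =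
        τ₀ * Real.exp (-(ξ * z)) := by
  intro z
  have hK : 0 < κ₀ ^ 2 + τ₀ ^ 2 := by positivity
  have hM : 0 < κ₀ ^ 2 + τ₀ ^ 2 + ξ ^ 2 := by positivity
  have hc2 := sq_sqrt hK.le
  have hw2 := sq_sqrt hM.le
  have hc := sqrt_pos.2 hK
  have hw := sqrt_pos.2 hM
  generalize √(κ₀ ^ 2 + τ₀ ^ 2 + ξ ^ 2) = w at *
  generalize √(κ₀ ^ 2 + τ₀ ^ 2) = c at *
  have hwa : w ^ 2 = ξ ^ 2 + c ^ 2 := by linear_combination hw2 - hc2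
  have hn2 : (c * w / κ₀) ^ 2 = ξ ^ 2 + (τ₀ / κ₀ * w) ^ 2 + c ^ 2 := by
    field_simp
    linear_combination w ^ 2 * hc2 + κ₀ ^ 2 * hwa
  rw [← hn2, sqrt_sq (by positivity)]
  obtain ⟨h1, h2, h3⟩ := smul_logSpiral_invariants (s := (c * w / κ₀)⁻¹) (n := c * w / κ₀)
    hξ hc (by positivity) hw (by positivity) hwa hn2 rfl z
  refine ⟨h1.trans ?_, h2.trans ?_, h3.trans ?_⟩
  · rw [inv_mul_cancel₀ (by positivity), one_mul]
  · congr 1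
    field_simp
  · congr 1
    field_simp
end

section
/- Let ν(s,θ) = (−cos θ / cosh s, sin θ / cosh s, tanh s). Then: (i) the restriction of ν to ℝ × (−π, π] is a bijection onto the twice-punctured unit sphere {p ∈ ℝ³ : |p| = 1, p ≠ (0,0,1), p ≠ (0,0,−1)}; (ii) for all (s,θ) ∈ ℝ², ∂_sν · ∂_θν = 0 and |∂_sν|² = |∂_θν|² = cosh^{−2}(s), i.e., ν is conformal with conformal factor cosh^{−2}(s). -/
/-!
The third coordinate `tanh s` of the Gauss map determines `s`, since `tanh` is a bijection of `ℝ`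
onto `(-1, 1)`. At a fixed height the first two coordinates are `(-cos θ, sin θ)` scaled by the
radius `1 / cosh s = √(1 - tanh² s)` of the corresponding circle of latitude, so that `θ` is the
principal argument of the complex number `-x + i y`, whose range is exactly `(-π, π]`. The points
of the sphere that are missed are those of height `±1`, which are the two poles.

Conformality is the computation of both partial derivatives,
`∂_s ν = (cos θ sinh s / cosh² s, -sin θ sinh s / cosh² s, 1 / cosh² s)` and
`∂_θ ν = (sin θ / cosh s, cos θ / cosh s, 0)`, together with `cos² + sin² = 1` and
`cosh² - sinh² = 1`.
-/

open Real

/-- The conformal parametrization of the helicoid. -/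
noncomputable def helF (p : ℝ × ℝ) : ℝ × ℝ × ℝ :=
  (Real.sinh p.1 * Real.sin p.2, Real.sinh p.1 * Real.cos p.2, p.2)

/-- The Gauss map (unit normal) of the helicoid. -/
noncomputable def helNu (p : ℝ × ℝ) : ℝ × ℝ × ℝ :=
  (-Real.cos p.2 / Real.cosh p.1, Real.sin p.2 / Real.cosh p.1, Real.tanh p.1)

/-- Partial derivative in the first variable `s`. -/
noncomputable def pdS {V : Type*} [NormedAddCommGroup V] [NormedSpace ℝ V]
    (f : ℝ × ℝ → V) (p : ℝ × ℝ) : V := deriv (fun s => f (s, p.2)) p.1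

/-- Partial derivative in the second variable `θ`. -/
noncomputable def pdT {V : Type*} [NormedAddCommGroup V] [NormedSpace ℝ V]
    (f : ℝ × ℝ → V) (p : ℝ × ℝ) : V := deriv (fun θ => f (p.1, θ)) p.2

lemma pdS_helNu (p : ℝ × ℝ) :
    pdS helNu p = (Real.cos p.2 * Real.sinh p.1 / Real.cosh p.1 ^ 2,
      -(Real.sin p.2 * Real.sinh p.1) / Real.cosh p.1 ^ 2, (Real.cosh p.1 ^ 2)⁻¹) := by
  have hc : Real.cosh p.1 ≠ 0 := (Real.cosh_pos _).ne'
  have h1 : HasDerivAt (fun s => -Real.cos p.2 / Real.cosh s)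
      (Real.cos p.2 * Real.sinh p.1 / Real.cosh p.1 ^ 2) p.1 := by
    refine ((hasDerivAt_const p.1 (-Real.cos p.2)).fun_div (Real.hasDerivAt_cosh p.1) hc).congr_deriv ?_
    ring
  have h2 : HasDerivAt (fun s => Real.sin p.2 / Real.cosh s)
      (-(Real.sin p.2 * Real.sinh p.1) / Real.cosh p.1 ^ 2) p.1 := by
    refine ((hasDerivAt_const p.1 (Real.sin p.2)).fun_div (Real.hasDerivAt_cosh p.1) hc).congr_deriv ?_
    ring
  have h3 : HasDerivAt Real.tanh (Real.cosh p.1 ^ 2)⁻¹ p.1 := by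
    rw [show Real.tanh = fun s => Real.sinh s / Real.cosh s from
      funext Real.tanh_eq_sinh_div_cosh]
    refine ((Real.hasDerivAt_sinh p.1).fun_div (Real.hasDerivAt_cosh p.1) hc).congr_deriv ?_
    field_simp
    exact Real.cosh_sq_sub_sinh_sq p.1
  exact (h1.prodMk (h2.prodMk h3)).deriv

lemma pdT_helNu (p : ℝ × ℝ) :
    pdT helNu p = (Real.sin p.2 / Real.cosh p.1, Real.cos p.2 / Real.cosh p.1, 0) := by
  have h1 : HasDerivAt (fun θ => -Real.cos θ / Real.cosh p.1)
      (Real.sin p.2 / Real.cosh p.1) p.2 := by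
    simpa using (Real.hasDerivAt_cos p.2).fun_neg.div_const (Real.cosh p.1)
  have h2 : HasDerivAt (fun θ => Real.sin θ / Real.cosh p.1)
      (Real.cos p.2 / Real.cosh p.1) p.2 :=
    (Real.hasDerivAt_sin p.2).div_const (Real.cosh p.1)
  exact (h1.prodMk (h2.prodMk (hasDerivAt_const p.2 (Real.tanh p.1)))).deriv

lemma enorm3_eq_one_iff (v : ℝ × ℝ × ℝ) :
    enorm3 v = 1 ↔ v.1 ^ 2 + v.2.1 ^ 2 + v.2.2 ^ 2 = 1 :=
  Real.sqrt_eq_one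

lemma helNu_mem_sphere (p : ℝ × ℝ) :
    enorm3 (helNu p) = 1 ∧ helNu p ≠ (0, 0, 1) ∧ helNu p ≠ (0, 0, -1) := by
  refine ⟨?_, fun h => ?_, fun h => ?_⟩
  · have hc : Real.cosh p.1 ≠ 0 := (Real.cosh_pos _).ne'
    rw [enorm3_eq_one_iff]
    simp only [helNu, Real.tanh_eq_sinh_div_cosh]
    field_simp
    linear_combination Real.sin_sq_add_cos_sq p.2 - Real.cosh_sq_sub_sinh_sq p.1
  · exact (Real.tanh_lt_one p.1).ne (congrArg (fun q => q.2.2) h)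
  · exact (Real.neg_one_lt_tanh p.1).ne' (congrArg (fun q => q.2.2) h)

lemma helNu_injOn : Set.InjOn helNu ((Set.univ : Set ℝ) ×ˢ Set.Ioc (-Real.pi) Real.pi) := by
  rintro ⟨s, θ⟩ ⟨-, hθ⟩ ⟨t, φ⟩ ⟨-, hφ⟩ h
  dsimp only at hθ hφ
  simp only [helNu, Prod.mk.injEq] at h
  obtain ⟨hcos, hsin, htanh⟩ := h
  obtain rfl : s = t := Real.tanh_injective htanh
  have hc : Real.cosh s ≠ 0 := (Real.cosh_pos _).ne'
  rw [div_left_inj' hc] at hcos hsin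
  rw [neg_inj] at hcos
  have key : θ = φ := by
    rw [← Complex.arg_cos_add_sin_mul_I hθ, ← Complex.arg_cos_add_sin_mul_I hφ]
    simp only [← Complex.ofReal_cos, ← Complex.ofReal_sin, hcos, hsin]
  rw [key]

lemma helNu_surjOn : Set.SurjOn helNu ((Set.univ : Set ℝ) ×ˢ Set.Ioc (-Real.pi) Real.pi)
    {q : ℝ × ℝ × ℝ | enorm3 q = 1 ∧ q ≠ (0, 0, 1) ∧ q ≠ (0, 0, -1)} := by
  rintro ⟨x, y, z⟩ ⟨hq, hN, hS⟩
  rw [enorm3_eq_one_iff] at hq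
  dsimp only at hq
  -- A point of the sphere at height `±1` has `x = y = 0`, hence is a pole.
  have hz : z ^ 2 < 1 := by
    by_contra! hz
    have hx : x = 0 := by nlinarith [sq_nonneg x, sq_nonneg y]
    have hy : y = 0 := by nlinarith [sq_nonneg x, sq_nonneg y]
    subst hx hy
    rcases sq_eq_sq_iff_eq_or_eq_neg.1 (by nlinarith : z ^ 2 = 1 ^ 2) with rfl | rfl
    · exact hN rfl
    · exact hS rfl
  have hz' : z ∈ Set.Ioo (-1 : ℝ) 1 := abs_lt.1 ((sq_lt_one_iff_abs_lt_one z).1 hz)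
  set w : ℂ := ⟨-x, y⟩ with hw
  have hnorm : √(1 - z ^ 2) = ‖w‖ := by
    rw [Complex.norm_eq_sqrt_sq_add_sq]
    congr 1
    simp only [hw]
    linarith
  refine ⟨(Real.artanh z, w.arg), ⟨trivial, Complex.arg_mem_Ioc w⟩, ?_⟩
  have hre : ‖w‖ * Real.cos w.arg = -x := Complex.norm_mul_cos_arg w
  have him : ‖w‖ * Real.sin w.arg = y := Complex.norm_mul_sin_arg w
  simp only [helNu, Real.tanh_artanh hz', Real.cosh_artanh hz', hnorm, div_div_eq_mul_div,
    div_one, Prod.mk.injEq, and_true]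
  exact ⟨by linarith, by linarith⟩

/-- The Gauss map of the helicoid restricts to a bijection from `ℝ × (−π, π]` onto the
twice-punctured unit sphere, and is conformal with conformal factor `cosh^{−2}(s)`. -/
theorem helicoid_gauss_map :
    Set.BijOn helNu ((Set.univ : Set ℝ) ×ˢ Set.Ioc (-Real.pi) Real.pi)
      {q : ℝ × ℝ × ℝ | enorm3 q = 1 ∧ q ≠ (0, 0, 1) ∧ q ≠ (0, 0, -1)} ∧
    ∀ p : ℝ × ℝ,
      dot3 (pdS helNu p) (pdT helNu p) = 0 ∧
      dot3 (pdS helNu p) (pdS helNu p) = (Real.cosh p.1 ^ 2)⁻¹ ∧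
      dot3 (pdT helNu p) (pdT helNu p) = (Real.cosh p.1 ^ 2)⁻¹ := by
  refine ⟨⟨fun p _ => helNu_mem_sphere p, helNu_injOn, helNu_surjOn⟩, fun p => ?_⟩
  have hc : Real.cosh p.1 ≠ 0 := (Real.cosh_pos _).ne'
  have h1 := Real.sin_sq_add_cos_sq p.2
  have h2 := Real.cosh_sq_sub_sinh_sq p.1
  rw [pdS_helNu, pdT_helNu]
  simp only [dot3]
  refine ⟨?_, ?_, ?_⟩
  · field_simp
    ring
  · field_simp
    linear_combination Real.sinh p.1 ^ 2 * h1 - h2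
  · field_simp
    linear_combination h1
end

section
/- Let Ē : ℝ → ℝ be continuous, and define v̄(s) := tanh(s) · ∫₀^s h(s') ds', where h(s') := tanh^{−2}(s') · ∫₀^{s'} tanh(s'') Ē(s'') ds'' for s' ≠ 0 and h(0) := Ē(0)/2 (the continuous extension). Then v̄ is twice continuously differentiable on ℝ and satisfies v̄''(s) + 2 cosh^{−2}(s) · v̄(s) = Ē(s) for all s ∈ ℝ. -/
/-!
Reduction of order with the homogeneous solution `tanh`. Write `F s = ∫ t in 0..s, tanh t * E t`,
`h = redOrd E` and `H s = ∫ t in 0..s, h t`, so that `h = F / tanh ^ 2` away from `0` and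
`vbar E = tanh * H`.

L'Hôpital's rule gives `F / tanh ^ 2 → E 0 / 2` at `0`, so `h` is continuous and
`vbar' = sech ^ 2 * H + tanh * h`. The function `tanh * h` has derivative `E - sech ^ 2 * h`: away
from `0` this is the quotient rule for `F / tanh`, and it extends to `0` because both sides are
continuous there. Hence `vbar'' = -2 * sech ^ 2 * tanh * H + E`, which is the equation, and whose
right-hand side is continuous.
-/

open Real

/-- The reduction-of-order integrand `h(s') = tanh^{−2}(s')·∫₀^{s'} tanh(s'')Ē(s'')ds''`,
continuously extended by `h(0) = Ē(0)/2`. -/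
noncomputable def redOrd (E : ℝ → ℝ) (s' : ℝ) : ℝ :=
  if s' = 0 then E 0 / 2
  else (Real.tanh s' ^ 2)⁻¹ * ∫ t in (0:ℝ)..s', Real.tanh t * E t

/-- The explicit reduction-of-order solution `v̄(s) = tanh(s)·∫₀^s h(s')ds'`. -/
noncomputable def vbar (E : ℝ → ℝ) (s : ℝ) : ℝ :=
  Real.tanh s * ∫ t in (0:ℝ)..s, redOrd E t

open Filter Topology

theorem hasDerivAt_tanh_aux (s : ℝ) : HasDerivAt Real.tanh ((cosh s ^ 2)⁻¹) s := by
  have hc : cosh s ≠ 0 := (cosh_pos s).ne'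
  have h := (hasDerivAt_sinh s).div (hasDerivAt_cosh s) hc
  have e : Real.tanh = sinh / cosh := by
    funext x
    simp [Real.tanh_eq_sinh_div_cosh]
  rw [e]
  refine h.congr_deriv ?_
  have := cosh_sq s
  field_simp
  linarith

theorem continuous_tanh_aux : Continuous Real.tanh :=
  continuous_iff_continuousAt.2 fun s => (hasDerivAt_tanh_aux s).continuousAt

theorem tanh_ne_zero_aux {s : ℝ} (hs : s ≠ 0) : Real.tanh s ≠ 0 := fun h =>
  hs (Real.tanh_injective (h.trans Real.tanh_zero.symm))

theorem hasDerivAt_inner {E : ℝ → ℝ} (hE : Continuous E) (s : ℝ) :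
    HasDerivAt (fun x => ∫ t in (0:ℝ)..x, Real.tanh t * E t) (Real.tanh s * E s) s :=
  (continuous_tanh_aux.mul hE).integral_hasStrictDerivAt 0 s |>.hasDerivAt

theorem continuous_redOrd {E : ℝ → ℝ} (hE : Continuous E) : Continuous (redOrd E) := by
  have hF := hasDerivAt_inner hE
  have hT := hasDerivAt_tanh_aux
  rw [continuous_iff_continuousAt]
  intro s
  by_cases hs : s = 0
  · subst hs
    rw [continuousAt_iff_punctured_nhds]
    have hlim : Tendsto (fun x => (∫ t in (0:ℝ)..x, Real.tanh t * E t) / Real.tanh x ^ 2)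
        (𝓝[≠] 0) (𝓝 (E 0 / 2)) := by
      refine HasDerivAt.lhopital_zero_nhdsNE
        (f' := fun x => Real.tanh x * E x)
        (g' := fun x => 2 * Real.tanh x * (cosh x ^ 2)⁻¹)
        (Eventually.of_forall hF)
        (Eventually.of_forall fun x => by simpa using (hT x).fun_pow 2) ?_ ?_ ?_ ?_
      · filter_upwards [self_mem_nhdsWithin] with x hx
        have h1 := tanh_ne_zero_aux hx
        have h2 := (cosh_pos x).ne'
        positivity
      · simpa using (hF 0).continuousAt.tendsto.mono_left nhdsWithin_le_nhds
      · have h : Continuous fun x => Real.tanh x ^ 2 := continuous_tanh_aux.pow 2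
        simpa using (h.tendsto 0).mono_left nhdsWithin_le_nhds
      · have h : Tendsto (fun x => E x * cosh x ^ 2 / 2) (𝓝[≠] 0) (𝓝 (E 0 / 2)) := by
          have : Continuous fun x => E x * cosh x ^ 2 / 2 := by fun_prop
          simpa using (this.tendsto 0).mono_left nhdsWithin_le_nhds
        refine h.congr' ?_
        filter_upwards [self_mem_nhdsWithin] with x hx
        have h1 := tanh_ne_zero_aux hx
        have h2 := (cosh_pos x).ne'
        field_simp
    have h0 : redOrd E 0 = E 0 / 2 := by simp [redOrd]
    rw [h0]
    refine hlim.congr' ?_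
    filter_upwards [self_mem_nhdsWithin] with x hx
    have hx' : x ≠ 0 := hx
    simp [redOrd, hx', div_eq_inv_mul]
  · have h : ContinuousAt (fun x => (Real.tanh x ^ 2)⁻¹ * ∫ t in (0:ℝ)..x, Real.tanh t * E t) s :=
      ((continuous_tanh_aux.continuousAt.pow 2).inv₀ (pow_ne_zero 2 (tanh_ne_zero_aux hs))).mul
        (hF s).continuousAt
    refine h.congr ?_
    filter_upwards [isOpen_ne.mem_nhds hs] with x hx
    have hx' : x ≠ 0 := hx
    simp [redOrd, hx']

/-- The product `tanh * h` is differentiable everywhere, although `h` itself need not be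
differentiable at `0`. -/
theorem hasDerivAt_tanh_mul_redOrd {E : ℝ → ℝ} (hE : Continuous E) (s : ℝ) :
    HasDerivAt (fun x => Real.tanh x * redOrd E x) (E s - (cosh s ^ 2)⁻¹ * redOrd E s) s := by
  have hne : ∀ y : ℝ, y ≠ 0 →
      HasDerivAt (fun x => Real.tanh x * redOrd E x) (E y - (cosh y ^ 2)⁻¹ * redOrd E y) y := by
    intro y hy
    have hy1 := tanh_ne_zero_aux hy
    have h2 := (cosh_pos y).ne'
    have h := (hasDerivAt_inner hE y).div (hasDerivAt_tanh_aux y) hy1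
    refine (h.congr_deriv ?_).congr_of_eventuallyEq ?_
    · simp only [redOrd, hy, if_false]
      field_simp
    · filter_upwards [isOpen_ne.mem_nhds hy] with x hx
      have hx' : x ≠ 0 := hx
      have := tanh_ne_zero_aux hx'
      simp only [redOrd, hx', if_false, Pi.div_apply]
      field_simp
  have hR := continuous_redOrd hE
  by_cases hs : s = 0
  · subst hs
    have hc : Continuous fun y => E y - (cosh y ^ 2)⁻¹ * redOrd E y :=
      hE.sub (((continuous_cosh.pow 2).inv₀ fun x => pow_ne_zero 2 (cosh_pos x).ne').mul hR)
    exact hasDerivAt_of_hasDerivAt_of_ne (g := fun y => E y - (cosh y ^ 2)⁻¹ * redOrd E y) hne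
      (continuous_tanh_aux.mul hR).continuousAt hc.continuousAt
  · exact hne s hs

theorem hasDerivAt_vbar {E : ℝ → ℝ} (hE : Continuous E) (s : ℝ) :
    HasDerivAt (vbar E)
      ((cosh s ^ 2)⁻¹ * (∫ t in (0:ℝ)..s, redOrd E t) + Real.tanh s * redOrd E s) s :=
  (hasDerivAt_tanh_aux s).mul
    ((continuous_redOrd hE).integral_hasStrictDerivAt 0 s).hasDerivAt

theorem hasDerivAt_deriv_vbar {E : ℝ → ℝ} (hE : Continuous E) (s : ℝ) :
    HasDerivAt (deriv (vbar E)) (E s - 2 / cosh s ^ 2 * vbar E s) s := by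
  rw [funext fun x => (hasDerivAt_vbar hE x).deriv]
  have h2 := (cosh_pos s).ne'
  have hC := ((hasDerivAt_cosh s).pow 2).inv (pow_ne_zero 2 h2)
  have hH := ((continuous_redOrd hE).integral_hasStrictDerivAt 0 s).hasDerivAt
  refine ((hC.mul hH).add (hasDerivAt_tanh_mul_redOrd hE s)).congr_deriv ?_
  simp only [vbar, Real.tanh_eq_sinh_div_cosh, Pi.inv_apply, Pi.pow_apply]
  field_simp
  ring

/-- The explicit double integral `v̄` is `C²` and inverts the θ-independent reduction
`d²/ds² + 2cosh^{−2}(s)` of the rescaled helicoid stability operator. -/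
theorem vbar_solves_ode (E : ℝ → ℝ) (hE : Continuous E) :
    ContDiff ℝ 2 (vbar E) ∧
      ∀ s : ℝ, deriv (deriv (vbar E)) s + 2 / Real.cosh s ^ 2 * vbar E s = E s := by
  have h1 : Differentiable ℝ (vbar E) := fun s => (hasDerivAt_vbar hE s).differentiableAt
  have h2 : Differentiable ℝ (deriv (vbar E)) := fun s =>
    (hasDerivAt_deriv_vbar hE s).differentiableAt
  refine ⟨?_, fun s => ?_⟩
  · have e : (2 : WithTop ℕ∞) = 1 + 1 := by norm_num
    rw [e, contDiff_succ_iff_deriv]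
    refine ⟨h1, by simp, ?_⟩
    rw [contDiff_one_iff_deriv]
    refine ⟨h2, ?_⟩
    rw [funext fun x => (hasDerivAt_deriv_vbar hE x).deriv]
    exact hE.sub ((continuous_const.div (continuous_cosh.pow 2) fun x =>
      pow_ne_zero 2 (cosh_pos x).ne').mul h1.continuous)
  · rw [(hasDerivAt_deriv_vbar hE s).deriv]
    ring
end

section
/- Let F(s,θ) = (sinh s · sin θ, sinh s · cos θ, θ), ν(s,θ) = (−cos θ/cosh s, sin θ/cosh s, tanh s), let ψ : ℝ → [0,1] be a fixed smooth function with ψ(s) = 0 for |s| ≤ 1 and ψ(s) = 1 for |s| ≥ 2, and set u_x(s,θ) = (1/4π)ψ(s)cos θ cosh s and u_y(s,θ) = (1/4π)ψ(s)sin θ cosh s. Then there exists ε > 0 such that for all b_x, b_y ∈ ℝ with |b_x| ≤ ε and |b_y| ≤ ε, and every continuously differentiable map 𝐯 : ℝ² → ℝ³ with sup_{ℝ²}(|𝐯| + |D𝐯|) ≤ ε, the map (s,θ) ↦ F(s,θ) + 𝐯(s,θ) + (b_x u_x(s,θ) + b_y u_y(s,θ)) · ν(s,θ) is injective on ℝ².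 -/
/-!
Write `h θ = bx cos θ + by sin θ`, `c = 1 / (4π)` and `χ s = (ψ s - 1) sinh s`. Where `ψ = 1`, the
vertical part `c h(θ) sinh s` of the normal displacement equals `c (bx y + by x)` at the point
`(x, y, z)` of the helicoid, so it is the effect of the linear shear
`L (x, y, z) = (x, y, z + c (bx y + by x))`. The perturbed map is therefore `L ∘ F + r` with
`r = v + c (-ψ h cos, ψ h sin, χ h)`, and `r` is both bounded and Lipschitz with constants `O(ε)`,
because `ψ - 1` and `χ` are smooth and compactly supported (`exists_cutoff_bound`).

If two points `(s, θ)`, `(s', θ')` at distance `d` have the same image, then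
`F(s, θ) - F(s', θ')` is `O(ε min (1, d))` in every coordinate, since `L` is close to the identity.
Thus `θ - θ'` is less than `π / 2` in absolute value, and in that range the horizontal separation
of the points of the helicoid controls `|s - s'|` (`sq_sub_le_horizontal`). Hence `d ≤ d / 2`, so
`d = 0`.
-/

open Real

/-- The substitute-kernel graph functions built from a cutoff `ψ`. -/
noncomputable def subUX (ψ : ℝ → ℝ) (p : ℝ × ℝ) : ℝ :=
  (1 / (4 * Real.pi)) * ψ p.1 * Real.cos p.2 * Real.cosh p.1
noncomputable def subUY (ψ : ℝ → ℝ) (p : ℝ × ℝ) : ℝ :=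
  (1 / (4 * Real.pi)) * ψ p.1 * Real.sin p.2 * Real.cosh p.1

/-- A continuously differentiable function on `ℝ` vanishing for `|s| ≥ 2` is bounded and Lipschitz. -/
lemma exists_bound_lipschitz (f : ℝ → ℝ) (hf : ContDiff ℝ 1 f) (h0 : ∀ s, 2 ≤ |s| → f s = 0) :
    ∃ M : ℝ, (∀ s, |f s| ≤ M) ∧ ∀ s t, |f s - f t| ≤ M * |s - t| := by
  have hc : HasCompactSupport f := by
    refine HasCompactSupport.intro (isCompact_Icc (a := (-2 : ℝ)) (b := 2)) ?_
    intro x hx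
    apply h0
    by_contra! h
    exact hx ⟨(abs_lt.1 h).1.le, (abs_lt.1 h).2.le⟩
  obtain ⟨C, hC⟩ := hf.lipschitzWith_of_hasCompactSupport hc (by norm_num)
  obtain ⟨B, hB⟩ := hc.exists_bound_of_continuous hf.continuous
  refine ⟨max B C, fun s => (hB s).trans (le_max_left _ _), fun s t => ?_⟩
  have h := hC.dist_le_mul s t
  rw [Real.dist_eq, Real.dist_eq] at h
  exact h.trans (by gcongr; exact le_max_right _ _)

/-- The constant `M` on which the choice of `ε` depends. -/
lemma exists_cutoff_bound (ψ : ℝ → ℝ) (hψ : ContDiff ℝ (⊤ : ℕ∞) ψ)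
    (hψ1 : ∀ s : ℝ, 2 ≤ |s| → ψ s = 1) :
    ∃ M : ℝ, 1 ≤ M ∧ (∀ s t, |ψ s - ψ t| ≤ M * |s - t|) ∧
      (∀ s, |(ψ s - 1) * Real.sinh s| ≤ M) ∧
      ∀ s t, |(ψ s - 1) * Real.sinh s - (ψ t - 1) * Real.sinh t| ≤ M * |s - t| := by
  have hψ' : ContDiff ℝ 1 ψ := hψ.of_le (by exact_mod_cast le_top)
  obtain ⟨M₁, -, h₁⟩ := exists_bound_lipschitz (fun s => ψ s - 1) (hψ'.sub contDiff_const)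
    (fun s hs => by simp [hψ1 s hs])
  obtain ⟨M₂, h₂, h₃⟩ := exists_bound_lipschitz (fun s => (ψ s - 1) * Real.sinh s)
    ((hψ'.sub contDiff_const).mul Real.contDiff_sinh) (fun s hs => by simp [hψ1 s hs])
  refine ⟨max 1 (max M₁ M₂), le_max_left _ _, fun s t => ?_, fun s => ?_, fun s t => ?_⟩
  · have h := h₁ s t
    rw [show ψ s - 1 - (ψ t - 1) = ψ s - ψ t by ring] at h
    exact h.trans (by gcongr; simp)
  · exact (h₂ s).trans (by simp)
  · exact (h₃ s t).trans (by gcongr; simp)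

lemma abs_sub_le_abs_sinh_sub (s t : ℝ) : |s - t| ≤ |Real.sinh s - Real.sinh t| := by
  have key : ∀ {a b : ℝ}, a ≤ b → b - a ≤ Real.sinh b - Real.sinh a := fun {a b} h => by
    have : Real.sinh a - a ≤ Real.sinh b - b := Real.sinh_sub_id_strictMono.monotone h
    linarith
  rcases le_total s t with h | h
  · rw [abs_sub_comm, abs_sub_comm (Real.sinh s), abs_of_nonneg (sub_nonneg.2 h)]
    exact (key h).trans (le_abs_self _)
  · rw [abs_of_nonneg (sub_nonneg.2 h)]
    exact (key h).trans (le_abs_self _)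

/-- If the angles differ by at most `π / 2`, the horizontal distance of two points of the helicoid
controls the difference of their `s`-parameters. -/
lemma sq_sub_le_horizontal (s t θ φ : ℝ) (h : |θ - φ| ≤ Real.pi / 2) :
    (s - t) ^ 2 ≤ 2 * ((Real.sinh s * Real.sin θ - Real.sinh t * Real.sin φ) ^ 2 +
      (Real.sinh s * Real.cos θ - Real.sinh t * Real.cos φ) ^ 2) := by
  have h1 : (s - t) ^ 2 ≤ (Real.sinh s - Real.sinh t) ^ 2 :=
    sq_le_sq.2 (abs_sub_le_abs_sinh_sub s t)
  have hc0 : 0 ≤ Real.cos (θ - φ) :=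
    Real.cos_nonneg_of_mem_Icc ⟨by linarith [(abs_le.1 h).1], (abs_le.1 h).2⟩
  have hc1 := Real.cos_le_one (θ - φ)
  have e : (Real.sinh s * Real.sin θ - Real.sinh t * Real.sin φ) ^ 2 +
      (Real.sinh s * Real.cos θ - Real.sinh t * Real.cos φ) ^ 2 =
      Real.sinh s ^ 2 + Real.sinh t ^ 2 - 2 * Real.sinh s * Real.sinh t * Real.cos (θ - φ) := by
    rw [Real.cos_sub]
    linear_combination Real.sinh s ^ 2 * Real.sin_sq_add_cos_sq θ +
      Real.sinh t ^ 2 * Real.sin_sq_add_cos_sq φ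
  rw [e]
  generalize Real.cos (θ - φ) = k at *
  generalize Real.sinh s = a at *
  generalize Real.sinh t = b at *
  -- With `k ∈ [0, 1]`, the right side of the goal minus `(a - b)²` is
  -- `k (a - b)² + (1 - k) (a + b)²`.
  nlinarith [mul_nonneg hc0 (sq_nonneg (a - b)), mul_nonneg (sub_nonneg.2 hc1) (sq_nonneg (a + b))]

/-- Size and increment bounds for products: `f` has size `A` and increment `A' d`, and `g` has size
`B` and increment `B' d`. -/
lemma abs_mul_sub_mul_le {f f' g g' A A' B B' d : ℝ} (hf : |f| ≤ A) (hg' : |g'| ≤ B)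
    (hff : |f - f'| ≤ A' * d) (hgg : |g - g'| ≤ B' * d) :
    |f * g - f' * g'| ≤ (A * B' + A' * B) * d := by
  have hA := (abs_nonneg f).trans hf
  have hB := (abs_nonneg _).trans hff
  calc |f * g - f' * g'| = |f * (g - g') + (f - f') * g'| := by ring_nf
    _ ≤ |f * (g - g')| + |(f - f') * g'| := abs_add_le _ _
    _ = |f| * |g - g'| + |f - f'| * |g'| := by rw [abs_mul, abs_mul]
    _ ≤ A * (B' * d) + A' * d * B := by gcongr
    _ = _ := by ring

lemma abs_mul_sub_mul_le' {f f' g g' A B : ℝ} (hf : |f| ≤ A) (hf' : |f'| ≤ A) (hg : |g| ≤ B)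
    (hg' : |g'| ≤ B) : |f * g - f' * g'| ≤ 2 * (A * B) := by
  have hA := (abs_nonneg f).trans hf
  calc |f * g - f' * g'| ≤ |f * g| + |f' * g'| := abs_sub _ _
    _ = |f| * |g| + |f'| * |g'| := by rw [abs_mul, abs_mul]
    _ ≤ A * B + A * B := by gcongr
    _ = _ := by ring

lemma abs_sub_le_of_horizontal_le {s t θ φ m : ℝ} (hm0 : 0 ≤ m)
    (hX : |Real.sinh s * Real.sin θ - Real.sinh t * Real.sin φ| ≤ 1 / 7 * m)
    (hY : |Real.sinh s * Real.cos θ - Real.sinh t * Real.cos φ| ≤ 1 / 7 * m)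
    (hZ : |θ - φ| ≤ Real.pi / 2) : |s - t| ≤ 1 / 2 * m := by
  refine abs_le_of_sq_le_sq ((sq_sub_le_horizontal s t θ φ hZ).trans ?_) (by positivity)
  have a := sq_le_sq' (abs_le.1 hX).1 (abs_le.1 hX).2
  have b := sq_le_sq' (abs_le.1 hY).1 (abs_le.1 hY).2
  linarith [sq_nonneg m]

/-- Bounds for the amplitude `h θ = bx cos θ + by sin θ` of the substitute-kernel functions. -/
lemma amplitude_bounds {bx b ε : ℝ} (hbx : |bx| ≤ ε) (hby : |b| ≤ ε) :
    (∀ θ, |bx * Real.cos θ + b * Real.sin θ| ≤ 2 * ε) ∧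
    ∀ θ φ, |(bx * Real.cos θ + b * Real.sin θ) - (bx * Real.cos φ + b * Real.sin φ)|
      ≤ 2 * ε * |θ - φ| := by
  have hε := (abs_nonneg _).trans hbx
  constructor
  · intro θ
    calc _ ≤ |bx * Real.cos θ| + |b * Real.sin θ| := abs_add_le _ _
      _ = |bx| * |Real.cos θ| + |b| * |Real.sin θ| := by rw [abs_mul, abs_mul]
      _ ≤ ε * 1 + ε * 1 := by
        gcongr
        · exact Real.abs_cos_le_one θ
        · exact Real.abs_sin_le_one θ
      _ = _ := by ring
  · intro θ φ
    have hcL := Real.abs_cos_sub_cos_le θ φ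
    have hsL := Real.abs_sin_sub_sin_le θ φ
    calc _ = |bx * (Real.cos θ - Real.cos φ) + b * (Real.sin θ - Real.sin φ)| := by ring_nf
      _ ≤ |bx * (Real.cos θ - Real.cos φ)| + |b * (Real.sin θ - Real.sin φ)| := abs_add_le _ _
      _ = |bx| * |Real.cos θ - Real.cos φ| + |b| * |Real.sin θ - Real.sin φ| := by
        rw [abs_mul, abs_mul]
      _ ≤ ε * |θ - φ| + ε * |θ - φ| := by gcongr
      _ = _ := by ring

/-- The perturbed map is the sheared helicoid plus a remainder, written in coordinates. -/
lemma perturbed_eq (ψ : ℝ → ℝ) (bx by_ s θ : ℝ) (w : ℝ × ℝ × ℝ) :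
    helF (s, θ) + w + (bx * subUX ψ (s, θ) + by_ * subUY ψ (s, θ)) • helNu (s, θ) =
      (Real.sinh s * Real.sin θ + w.1 - 1 / (4 * Real.pi) *
          (ψ s * ((bx * Real.cos θ + by_ * Real.sin θ) * Real.cos θ)),
       Real.sinh s * Real.cos θ + w.2.1 + 1 / (4 * Real.pi) *
          (ψ s * ((bx * Real.cos θ + by_ * Real.sin θ) * Real.sin θ)),
       θ + 1 / (4 * Real.pi) * (bx * (Real.sinh s * Real.cos θ) + by_ * (Real.sinh s * Real.sin θ))
          + w.2.2 + 1 / (4 * Real.pi) *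
          ((ψ s - 1) * Real.sinh s * (bx * Real.cos θ + by_ * Real.sin θ))) := by
  have hc : Real.cosh s ≠ 0 := (Real.cosh_pos s).ne'
  have hpi := Real.pi_ne_zero
  ext
  · simp only [helF, helNu, subUX, subUY, Prod.fst_add, Prod.smul_fst, smul_eq_mul]
    field_simp
    ring
  · simp only [helF, helNu, subUX, subUY, Prod.fst_add, Prod.snd_add, Prod.smul_fst, Prod.smul_snd,
      smul_eq_mul]
    field_simp
  · simp only [helF, helNu, subUX, subUY, Prod.snd_add, Prod.smul_snd, smul_eq_mul,
      Real.tanh_eq_sinh_div_cosh]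
    field_simp
    ring

/-- Normal graphs over the helicoid by small multiples of the substitute-kernel
functions `u_x, u_y`, further perturbed by any vector field small in `C¹`, remain
embedded: the resulting map is injective on `ℝ²`. -/
theorem substitute_kernel_graphs_are_embedded
    (ψ : ℝ → ℝ) (hψ : ContDiff ℝ (⊤ : ℕ∞) ψ) (hψ01 : ∀ s, ψ s ∈ Set.Icc (0:ℝ) 1)
    (hψ0 : ∀ s : ℝ, |s| ≤ 1 → ψ s = 0) (hψ1 : ∀ s : ℝ, 2 ≤ |s| → ψ s = 1) :
    ∃ ε > (0 : ℝ), ∀ bx by_ : ℝ, |bx| ≤ ε → |by_| ≤ ε →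
      ∀ v : ℝ × ℝ → ℝ × ℝ × ℝ, ContDiff ℝ 1 v →
      (∀ p : ℝ × ℝ, ‖v p‖ + ‖fderiv ℝ v p‖ ≤ ε) →
      Function.Injective (fun p : ℝ × ℝ =>
        helF p + v p + (bx * subUX ψ p + by_ * subUY ψ p) • helNu p) := by
  obtain ⟨M, hM1, hψL, hχB, hχL⟩ := exists_cutoff_bound ψ hψ hψ1
  have hM0 : 0 < M := by linarith
  -- Increments of each coordinate of `r` are at most `8 M ε min (1, d)`, here `min (1, d) / 7`.
  refine ⟨1 / (56 * M), by positivity, fun bx by_ hbx hby v hv hvε => ?_⟩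
  have hε : M * (1 / (56 * M)) = 1 / 56 := by field_simp
  have hε0 : 0 < 1 / (56 * M) := by positivity
  generalize 1 / (56 * M) = ε at *
  have hεle : ε ≤ 1 / 56 := by nlinarith
  rintro ⟨s, θ⟩ ⟨t, φ⟩ h
  simp only [perturbed_eq, Prod.mk.injEq] at h
  obtain ⟨h1, h2, h3⟩ := h
  set d : ℝ := max |s - t| |θ - φ| with hd
  have hsd : |s - t| ≤ d := le_max_left _ _
  have hθd : |θ - φ| ≤ d := le_max_right _ _
  have hd0 : 0 ≤ d := (abs_nonneg _).trans hsd
  have hvL : ‖v (s, θ) - v (t, φ)‖ ≤ ε * d := by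
    have := Convex.norm_image_sub_le_of_norm_fderiv_le (𝕜 := ℝ) (f := v) (C := ε) (s := Set.univ)
      (x := (t, φ)) (y := (s, θ))
      (fun x _ => (hv.differentiable (by norm_num)) x)
      (fun x _ => by linarith [hvε x, norm_nonneg (v x)])
      convex_univ (Set.mem_univ _) (Set.mem_univ _)
    simpa [Prod.norm_def, hd] using this
  have hvB : ‖v (s, θ) - v (t, φ)‖ ≤ 2 * ε := by
    have := norm_sub_le (v (s, θ)) (v (t, φ))
    linarith [hvε (s, θ), hvε (t, φ), norm_nonneg (fderiv ℝ v (s, θ)),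
      norm_nonneg (fderiv ℝ v (t, φ))]
  set m : ℝ := min 1 d with hm
  have hm0 : 0 ≤ m := le_min zero_le_one hd0
  have hm1 : m ≤ 1 := min_le_left _ _
  have hmd : m ≤ d := min_le_right _ _
  have hmin : ∀ {x K : ℝ}, x ≤ K → x ≤ K * d → x ≤ K * m := fun {x K} a b => by
    rcases min_choice 1 d with h' | h' <;> rw [hm, h'] <;> linarith
  have hvm : ‖v (s, θ) - v (t, φ)‖ ≤ 2 / 56 * m :=
    hmin (by linarith) (hvL.trans (by gcongr; linarith))
  have hv1 : |(v (s, θ)).1 - (v (t, φ)).1| ≤ 2 / 56 * m := (norm_fst_le _).trans hvm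
  have hv2 : |(v (s, θ)).2.1 - (v (t, φ)).2.1| ≤ 2 / 56 * m :=
    ((norm_fst_le _).trans (norm_snd_le (v (s, θ) - v (t, φ)))).trans hvm
  have hv3 : |(v (s, θ)).2.2 - (v (t, φ)).2.2| ≤ 2 / 56 * m :=
    ((norm_snd_le _).trans (norm_snd_le (v (s, θ) - v (t, φ)))).trans hvm
  have hsL := (Real.abs_sin_sub_sin_le θ φ).trans hθd
  have hcL := (Real.abs_cos_sub_cos_le θ φ).trans hθd
  have hψB : ∀ s, |ψ s| ≤ 1 := fun s => abs_le.2 ⟨by linarith [(hψ01 s).1], (hψ01 s).2⟩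
  have hψd : |ψ s - ψ t| ≤ M * d := (hψL s t).trans (by gcongr)
  have hχd := (hχL s t).trans (by gcongr : M * |s - t| ≤ M * d)
  obtain ⟨hB, hLip⟩ := amplitude_bounds hbx hby
  have hL := (hLip θ φ).trans (by gcongr : 2 * ε * |θ - φ| ≤ 2 * ε * d)
  generalize hH : (fun θ => bx * Real.cos θ + by_ * Real.sin θ) = H
  have hH' : ∀ θ, bx * Real.cos θ + by_ * Real.sin θ = H θ := fun θ => congrFun hH θ
  simp only [hH'] at h1 h2 h3 hB hL
  clear hLip
  -- `g` stands for `sin` or `cos`.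
  have hG : ∀ g : ℝ → ℝ, (∀ x, |g x| ≤ 1) → |g θ - g φ| ≤ d →
      |ψ s * (H θ * g θ) - ψ t * (H φ * g φ)| ≤ 6 / 56 * m := fun g hg hgd => by
    have hHg : ∀ x, |H x * g x| ≤ 2 * ε := fun x => by
      rw [abs_mul]
      calc _ ≤ 2 * ε * 1 := by gcongr; exacts [hB x, hg x]
        _ = _ := by ring
    refine hmin ((abs_mul_sub_mul_le' (hψB s) (hψB t) (hHg θ) (hHg φ)).trans (by linarith)) ?_
    refine (abs_mul_sub_mul_le (hψB s) (hHg φ) hψd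
      (abs_mul_sub_mul_le (hB θ) (hg φ) hL (hgd.trans (one_mul d).ge))).trans ?_
    exact mul_le_mul_of_nonneg_right (by linarith) hd0
  have hc := hG Real.cos Real.abs_cos_le_one hcL
  have hs := hG Real.sin Real.abs_sin_le_one hsL
  have hx : |(ψ s - 1) * Real.sinh s * H θ - (ψ t - 1) * Real.sinh t * H φ| ≤ 6 / 56 * m := by
    refine hmin ((abs_mul_sub_mul_le' (hχB s) (hχB t) (hB θ) (hB φ)).trans (by linarith)) ?_
    refine (abs_mul_sub_mul_le (hχB s) (hB φ) hχd hL).trans ?_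
    exact mul_le_mul_of_nonneg_right (by linarith) hd0
  have hk0 : 0 ≤ 1 / (4 * Real.pi) := by positivity
  have hk1 : 1 / (4 * Real.pi) ≤ 1 / 12 := by
    rw [div_le_div_iff₀ (by positivity) (by norm_num)]
    linarith [Real.pi_gt_three]
  generalize 1 / (4 * Real.pi) = k at *
  have hk : ∀ {x y : ℝ}, |x| ≤ y → |k * x| ≤ y := fun {x y} hxy => by
    rw [abs_mul, abs_of_nonneg hk0]
    exact (mul_le_of_le_one_left (abs_nonneg x) (by linarith)).trans hxy
  have hX : |Real.sinh s * Real.sin θ - Real.sinh t * Real.sin φ| ≤ 1 / 7 * m := by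
    have a := abs_le.1 (hk hc)
    have b := abs_le.1 hv1
    rw [abs_le]
    constructor <;> linarith [a.1, a.2, b.1, b.2]
  have hY : |Real.sinh s * Real.cos θ - Real.sinh t * Real.cos φ| ≤ 1 / 7 * m := by
    have a := abs_le.1 (hk hs)
    have b := abs_le.1 hv2
    rw [abs_le]
    constructor <;> linarith [a.1, a.2, b.1, b.2]
  have hsmall : ∀ {b x : ℝ}, |b| ≤ ε → |x| ≤ 1 / 7 * m → |b * x| ≤ 1 / 56 * m :=
    fun {b x} hb hx' => by
      rw [abs_mul]
      calc |b| * |x| ≤ 1 / 56 * (1 / 7 * m) := by gcongr; exact hb.trans hεle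
        _ ≤ _ := by linarith
  have hZ : |θ - φ| ≤ 1 / 4 * m := by
    have a := abs_le.1 (hk hx)
    have b := abs_le.1 hv3
    have e := abs_le.1 (hk (hsmall hbx hY))
    have f := abs_le.1 (hk (hsmall hby hX))
    rw [abs_le]
    constructor <;> linarith [a.1, a.2, b.1, b.2, e.1, e.2, f.1, f.2]
  have hS' := abs_sub_le_of_horizontal_le hm0 hX hY (by linarith [Real.pi_gt_three])
  have hdle : d ≤ 1 / 2 * m := max_le hS' (by linarith)
  have hd00 : d = 0 := by linarith
  have es : s = t := sub_eq_zero.1 (abs_eq_zero.1 (le_antisymm (hd00 ▸ hsd) (abs_nonneg _)))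
  have eθ : θ = φ := sub_eq_zero.1 (abs_eq_zero.1 (le_antisymm (hd00 ▸ hθd) (abs_nonneg _)))
  rw [es, eθ]
end
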